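/- Let n = 85 and let x, y ∈ S_85 be the permutations given in the context, with z = (x·y)⁻¹. Then (x, y, z) is a nice triple; the cycle types of x, y, z are 15^5·5^2, 2^35 and 4^16·2^7 respectively; and the subgroup ⟨x, y⟩ of S_85 has cardinality 1958400 (the order of PSp(4,4):2). -/

import Mathlib

/-- `permInd s` = (sum of the cycle type of `s`) − (number of entries of the cycle type of `s`),
i.e. `n` minus the number of cycles of `s` when fixed points are counted as cycles. -/
def permInd {n : ℕ} (s : Equiv.Perm (Fin n)) : ℕ :=
  s.cycleType.sum - Multiset.card s.cycleType

/-- A `MulAction` is preprimitive if it is pretransitive and every block is trivial. -/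
def IsPreprimitive (G : Type*) (X : Type*) [Group G] [MulAction G X] : Prop :=
  MulAction.IsPretransitive G X ∧
    ∀ B : Set X, MulAction.IsBlock G B → MulAction.IsTrivialBlock B

/-- A triple `(x, y, z)` of permutations in `S_n` is *nice*:
(i) `x * y * z = 1`; (ii) `G = ⟨x, y⟩` is neither the alternating nor the symmetric group;
(iii) `G` acts primitively on `Fin n` and is almost simple; (iv) the triple has genus 0;
(v) the triple is rigid in `G`; (vi) `x`, `y`, `z` lie in rational conjugacy classes of `G`. -/
def IsNice {n : ℕ} (x y z : Equiv.Perm (Fin n)) : Prop :=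
  x * y * z = 1 ∧
  (Subgroup.closure {x, y} ≠ alternatingGroup (Fin n) ∧
    Subgroup.closure {x, y} ≠ ⊤) ∧
  IsPreprimitive (Subgroup.closure {x, y}) (Fin n) ∧
  (∃ S : Subgroup (Subgroup.closure {x, y}), S.Normal ∧ IsSimpleGroup S ∧
    (∃ a b : S, a * b ≠ b * a) ∧
    Subgroup.centralizer (S : Set (Subgroup.closure {x, y})) = ⊥) ∧
  permInd x + permInd y + permInd z = 2 * (n - 1) ∧
  (∀ x' y' z' : Equiv.Perm (Fin n),
    x' * y' * z' = 1 →
    Subgroup.closure {x', y'} = Subgroup.closure {x, y} →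
    (∃ g ∈ Subgroup.closure {x, y}, g * x * g⁻¹ = x') →
    (∃ g ∈ Subgroup.closure {x, y}, g * y * g⁻¹ = y') →
    (∃ g ∈ Subgroup.closure {x, y}, g * z * g⁻¹ = z') →
    ∃ g ∈ Subgroup.closure {x, y},
      g * x * g⁻¹ = x' ∧ g * y * g⁻¹ = y' ∧ g * z * g⁻¹ = z') ∧
  ∀ g ∈ ({x, y, z} : Set (Equiv.Perm (Fin n))), ∀ k : ℤ,
    Int.gcd k (orderOf g) = 1 →
    ∃ h ∈ Subgroup.closure {x, y}, h * g * h⁻¹ = g ^ k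

/-- The permutation given by a list of (disjoint) cycles, each written as a list of points. -/
def permOfCycles {n : ℕ} (cs : List (List (Fin n))) : Equiv.Perm (Fin n) :=
  (cs.map List.formPerm).prod

def x : Equiv.Perm (Fin 85) := permOfCycles [
  [1, 85, 49, 26, 15, 39, 65, 24, 37, 4, 23, 3, 28, 19, 76],
  [2, 82, 64, 74, 52, 58, 20, 70, 43, 7, 68, 12, 53, 40, 16],
  [5, 81, 51, 67, 54, 44, 41, 77, 30, 21, 71, 63, 33, 66, 18],
  [6, 42, 46, 50, 60, 22, 73, 80, 47, 45, 14, 31, 13, 55, 79],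
  [8, 62, 56, 36, 72, 69, 35, 25, 10, 84, 48, 34, 59, 27, 11],
  [9, 57, 83, 78, 17],
  [29, 38, 61, 75, 32]]

def y : Equiv.Perm (Fin 85) := permOfCycles [
  [3, 70],
  [5, 29],
  [6, 17],
  [7, 68],
  [8, 27],
  [9, 74],
  [14, 23],
  [15, 39],
  [16, 57],
  [18, 33],
  [19, 52],
  [20, 58],
  [22, 35],
  [24, 31],
  [25, 60],
  [26, 65],
  [30, 71],
  [32, 81],
  [34, 56],
  [36, 51],
  [38, 53],
  [40, 63],
  [41, 78],
  [42, 84],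
  [43, 61],
  [44, 48],
  [45, 75],
  [46, 50],
  [47, 72],
  [49, 55],
  [54, 67],
  [64, 82],
  [73, 80],
  [76, 79],
  [77, 83]]

namespace N85
open Equiv

def XI : ℕ :=
  0x81981f3d616899430ead21607c46257d283f4906204779ac5e8423977a67402a223e5d0282625c6341265b422b05ab087b7e8348ae6544aa0c85037f070a5f45240d4a9a2c0464662986809678275a3c090b1e0001

def XS : ℕ :=
  0x204b3d261d204b3d261d204b3d261d204b3d261d114e533909114e533909114e533909114e5339090b1b3b2230540a1923454824383e080b1b3b2230540a1923454824383e084f370d1f0e2d2f5049163c322e2a064f370d1f0e2d2f5049163c322e2a061242213f47151e4d292c36433351051242213f47151e4d292c36433351051028350c44072b46143a344a4052021028350c44072b46143a344a4052024c131c031704251841270f1a3100014c131c031704251841270f1a310001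

def YT : ℕ :=
  0x2a4d4020494c29534f2d09502f1e03450736421a52283e2b193b14102231432613242e372c48324b303d544e3f0f352533163812511847051c08413c1f0e23153a3421063927170d0c0b0a4a1b44111d0446020100

def AJ : ℕ :=
  0xd0280000a8a0433888005820c8030008300225253241400217a540018090010c08a000054d20200218b4d0081410814e000516640800802a98079805260008238488288041802004a4c400080400630c50c12611884c906c005000c0b01402408840148828209101d058088712e1090810100409060808c480c680505004980a1410010654aa31001008c0620c8920000441c004e001a0b40224301041854800800c207884e02c1020249010c80083035c0950010000098aa584244000d9020658c13080010840500a14064d00200b02850309c0008088000717560032002322a680808848988601400024110822822c0008a217009c0080801adb48580000184e8868024282200c002006020008984040d46d01b0083040010a2d308222811800020a44020724e0d004898a00000c80148403d22800028334a018004a5881010208a8042501d40c210c41480180709131040050028208a0e1c024c448004b003c200a00c05201a040804e840262802414c0890240e128522808015081020570098802a0e004080488850200042a012c82249501e3488100a004301a8800050420344a1108c01040e0c8b5308f0032000008400980057098111100b00110058c04c6400243400100963c84208003302120220a028001a0081208520c6a88000a026a493008d2d00002021b4808c0005c501050104260e00330001440430600033c2404401018880e9018841a12008000e74208c0504c8102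8009700b00480060b092010084096231420810a48482d0288006060614c1414620004a08405108140104195100c800c7295204641040860020301300124832085c40021ac000084103190152c0023084a6108095740010020034a2034402084034081a20455111400a440a58c0000982851084491000c831128802200020143232a0841114480102dc089040a122a800360970044008022648900c00511440b0cd000280821401508c4a0420206041892d0828450811c0100440403c180288020292280560924042e08480e080800a42c40086220151023804300214110088c2403004328a041680840820220a4603c41001664100805a8810190c0908080440245184007d0881c17091202840400122c040018000624d99a0011154203a4c09900802008309801041089400117802943082084158200c0a3002048b04182220c40401c81080c02010808977004b206ac231014010050020d008c00423200004f060c1889404050808043828402730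

def zc : List (List (Fin 85)) :=
  [[0, 1, 79, 49], [2, 57, 74, 82], [3, 14, 75, 43], [4, 37, 31, 23], [5, 33, 40, 38], [6, 76, 52, 9], [7, 61,
  53, 12], [10, 60, 46, 84], [13, 24, 26, 55], [16, 63, 30, 83], [17, 41, 48, 42], [19, 28, 70, 58], [27, 59,
  56, 62], [32, 45, 72, 51], [34, 44, 67, 36], [35, 69, 47, 73], [8, 11], [15, 65], [18, 66], [21, 71], [22,
  25], [29, 81], [77, 78]]

def BS : List ℕ :=
  [0, 1, 10, 37, 4, 8, 22]

def R1 : List ℕ :=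
  [24, 25, 33, 35, 56, 60, 69, 81]

def R2 : List ℕ :=
  [5, 6, 7, 9, 11, 12, 14, 15, 16, 17, 18, 19, 20, 23, 26, 29, 30, 31, 34, 36, 38, 39, 40, 41, 42, 43, 45, 46,
  49, 50, 51, 52, 53, 54, 55, 58, 59, 63, 64, 66, 67, 70, 71, 72, 74, 75, 76, 78, 79, 82, 84]

def R3 : List ℕ :=
  [2, 3, 13, 21, 27, 28, 32, 44, 47, 48, 57, 61, 62, 65, 68, 73, 77, 80, 83]

def L0 : List (List ℕ) :=
  [[0], [14], [8,10,0], [10], [8], [4,6,10], [2,1,0], [2,10,0], [6,3,1], [1,2,1], [14,3,1], [5,3,1], [4,10,0],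
  [14,1,0], [12,1,0], [3], [7,10,0], [0,2,1], [3,6,10], [12], [14,10,0], [13,6,10], [7,1,0], [9], [6],
  [13,3,1], [2], [4,3,1], [11], [2,11,1], [12,6,10], [13,1,0], [1,11,1], [1,6,10], [2,3,1], [12,3,1], [9,3,1],
  [7], [3,11,1], [4], [6,10,0], [10,6,10], [3,1,0], [1,10,0], [9,6,10], [11,1,0], [4,1,0], [10,1,0], [1,3,1],
  [1], [5,1,0], [6,6,10], [12,10,0], [5,10,0], [8,6,10], [0,1,0], [8,3,1], [2,2,1], [13,10,0], [3,3,1],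
  [6,1,0], [4,11,1], [7,3,1], [0,6,10], [10,10,0], [5], [2,6,10], [7,6,10], [3,10,0], [11,3,1], [0,10,0],
  [14,6,10], [10,3,1], [8,1,0], [11,10,0], [0,11,1], [13], [11,6,10], [4,2,1], [1,1,0], [9,1,0], [5,6,10],
  [9,10,0], [3,2,1], [0,3,1]]

def L1 : List (List ℕ) :=
  [[0], [13,9,11], [14,3,9], [1,14,0], [4,2,12,1,0], [1,6,3,2,0], [4,11,0], [10,10,2,2,0], [12,5,9,2,0],
  [11,11,2,2,0], [14,14,13], [7,7,14,13,0], [11,13,10,2,2], [2,4,9], [13,9,7,3,0], [12,2,9,11,0], [8,8,9,2,0],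
  [0,8,7], [11,13,2], [13,2,14,2,0], [1,3,4,7,0], [10,2,8,7,0], [7,6,9,11,0], [10,9,3,2,0], [4,6,2],
  [13,13,7], [10,12,2], [6,7,4,1,0], [10,6,11], [4,7,3], [13,13,2,2,0], [12,14,2], [7,4,3], [10,2,0],
  [10,6,6,2,0], [11,3,0], [1,7,7], [10,6,7,3,0], [12,8,11], [12,8,4,7,0], [0,11,3], [12,11,3,2,0],
  [7,9,9,2,0], [0,2,4,9,0], [8,7,0], [0,4,7,3,0], [7,3,2], [0,6,7,4,1], [9,8,4,1,0], [1,14,10,2,0], [6,12,1],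
  [12,4,10,2,0], [11,7,7,3,0], [4,4,2,2,0], [0,10,2], [14,3,4,2,0], [10,3,9,2,0], [14,6,8,1,0], [11,9,12,1,0],
  [4,4,7], [8,8,14], [1,9,2], [11,3,8,7,0], [8,2,2]]

def L2 : List (List ℕ) :=
  [[0], [8,9,8,9,1], [11,14,3], [13,14,13,1], [7,6,14,13,1]]

def L3 : List (List ℕ) :=
  [[0], [3,6,6,4,7,1], [12,2,5], [10,13,3]]

def L4 : List (List ℕ) :=
  [[0], [7,8], [0,7,8]]

def L5 : List (List ℕ) :=
  [[0], [6,9,3,9,6], [0,0]]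

def L6 : List (List ℕ) :=
  [[0], [6,9,3,9,6,0]]

def LA : List (List ℕ) :=
  [[10,6,11], [10,2,0], [0,11,3], [8,2,2], [0], [4,11,0], [1,14,0], [11,3,0], [0,10,2], [8,7,0], [7,5,4],
  [6,12,1], [0,12,4], [7,3,2], [11,14,3], [4,6,2], [1,9,2], [6,3,8,1,0], [2,2,14,1,0], [12,4,0]]

def TS : List (List ℕ) :=
  [[0], [4,14,13,13,10], [3,8,6,13,9,11,1], [13,9,14,13,13,5,2]]

def hx2 : List ℕ :=
  [0,2,8,14,13,7,4,2,1,0]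

def hxm : List ℕ :=
  [0,8,7,5,2,2,0]

def hz : List ℕ :=
  [10,6,13,5,2]

def cu : List ℕ :=
  [9,1,0]

def cv : List ℕ :=
  [13,14,9,2,8]

def XE : List (List ℕ × List ℕ) :=
  [([8], [4,14,13,13,10]), ([0], [4,14,13,13,10]), ([14,6,10], [13,9,14,13,13,5,2]), ([9,3,1],
  [4,14,13,13,10])]

def RR : List (List ℕ) :=
  [[0, 15], [0, 1, 14, 15], [0, 2, 13, 15], [0, 3, 12, 15], [0, 5, 10, 15], [0, 6, 9, 15], [0, 7, 8, 15], [0,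
  9, 6, 15], [0, 10, 5, 15], [0, 12, 3, 15], [0, 13, 2, 15], [0, 14, 1, 15], [0, 3, 1, 14, 12, 15], [0, 4, 1,
  14, 11, 15], [0, 6, 1, 14, 9, 15], [0, 7, 1, 14, 8, 15], [0, 8, 1, 14, 7, 15], [0, 9, 1, 14, 6, 15], [0, 10,
  1, 14, 5, 15], [0, 11, 1, 14, 4, 15], [0, 13, 1, 14, 2, 15], [0, 14, 1, 14, 1, 15], [0, 2, 2, 13, 13, 15],
  [0, 3, 2, 13, 12, 15], [0, 4, 2, 13, 11, 15], [0, 5, 2, 13, 10, 15], [0, 6, 2, 13, 9, 15], [0, 7, 2, 13, 8,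
  15], [0, 8, 2, 13, 7, 15], [0, 9, 2, 13, 6, 15], [0, 10, 2, 13, 5, 15], [0, 12, 2, 13, 3, 15], [0, 13, 2,
  13, 2, 15], [0, 14, 2, 13, 1, 15], [0, 2, 3, 12, 13, 15], [0, 4, 3, 12, 11, 15], [0, 5, 3, 12, 10, 15], [0,
  6, 3, 12, 9, 15], [0, 8, 3, 12, 7, 15], [0, 9, 3, 12, 6, 15], [0, 11, 3, 12, 4, 15], [0, 12, 3, 12, 3, 15],
  [0, 3, 5, 10, 12, 15], [0, 4, 5, 10, 11, 15], [0, 6, 5, 10, 9, 15], [0, 7, 5, 10, 8, 15], [0, 8, 5, 10, 7,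
  15], [0, 9, 5, 10, 6, 15], [0, 2, 6, 9, 13, 15], [0, 4, 6, 9, 11, 15], [0, 8, 6, 9, 7, 15], [0, 9, 6, 9, 6,
  15], [0, 13, 6, 9, 2, 15], [0, 14, 6, 9, 1, 15], [0, 9, 7, 8, 6, 15], [0, 3, 9, 6, 12, 15], [0, 6, 9, 6, 9,
  15], [0, 14, 9, 6, 1, 15], [0, 4, 10, 5, 11, 15], [0, 8, 10, 5, 7, 15], [0, 9, 10, 5, 6, 15], [0, 8, 12, 3,
  7, 15], [0, 13, 12, 3, 2, 15], [0, 14, 12, 3, 1, 15], [0, 2, 13, 2, 13, 15], [0, 14, 13, 2, 1, 15], [0, 6,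
  14, 1, 9, 15], [0, 7, 14, 1, 8, 15], [0, 8, 14, 1, 7, 15], [0, 9, 3, 1, 14, 12, 6, 15], [0, 7, 4, 1, 14, 11,
  8, 15], [0, 8, 4, 1, 14, 11, 7, 15], [0, 12, 4, 1, 14, 11, 3, 15], [0, 6, 7, 1, 14, 8, 9, 15], [0, 4, 10, 1,
  14, 5, 11, 15], [0, 8, 10, 1, 14, 5, 7, 15], [0, 14, 10, 1, 14, 5, 1, 15], [0, 8, 11, 1, 14, 4, 7, 15], [0,
  9, 11, 1, 14, 4, 6, 15], [0, 13, 14, 1, 14, 1, 2, 15], [0, 3, 2, 2, 13, 13, 12, 15], [0, 3, 3, 2, 13, 12,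
  12, 15], [0, 5, 4, 2, 13, 11, 10, 15], [0, 14, 4, 2, 13, 11, 1, 15], [0, 3, 5, 2, 13, 10, 12, 15], [0, 6, 5,
  2, 13, 10, 9, 15], [0, 2, 7, 2, 13, 8, 13, 15], [0, 5, 7, 2, 13, 8, 10, 15], [0, 4, 8, 2, 13, 7, 11, 15],
  [0, 6, 13, 2, 13, 2, 9, 15], [0, 3, 8, 6, 9, 7, 12, 15], [0, 9, 2, 13, 2, 13, 6, 15]]

def RT : List ℕ :=
  [0xb00a009000b080070068060050040004030020010000, 0x1501400ba1301201101000f00e00b30d00c00bd0be001,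
  0x2102001f01951e01d01c01b01a019018017016015e002, 0x4104229028004c2702601642502402301ab22021e003,
  0x26d27d03a0db19c2f02e02d02c01ad2b02a003d03e005, 0x3503400ca18b24c3303202be1ae1b131006d30026c006,
  0x36105317a23b07c3600083041751a60641aa23135e007, 0x39035306a2bb1bd1a231c3263802fb188370343303009,
  0x910922aa31b1a33c03b02ea2481923a009527839e00a, 0x3f03e01a51762f81da3d039c2760831341f508d08e00c,
  0x4103d423618419e1a11be1c125a1231992954003fe00d, 0x1101237a3ab01c1424404304201e32840150e241e00e,
  0xd235b44845c05c4504441fe20143937623e241379013, 0x28526848004b2812644704602e229b22d4280ce0d1014,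
  0xf20eb0ec0ed4363ce1a43e111833a1eb41c0b20e1016, 0xfe10141937229817430537d4901bb3c24350ee0f1017,
  0x10e11123922944c14728940c37543a42438a49a0fd018, 0x47c1dc42343b3373380e63a83081e642b18323710d019,
  0x4c032b42a1e71b84be4b014d4862224a00a531447b01a, 0x3ac3964173cd4374e04d02582ae2b10943a139a4ce01b,
  0x15212738542722e1ac2c110914414514644d0b914101d, 0x214f018d4ab2bd32145528747644345148514e15101e,
  0x2a43d63d74ea2db2d34662922d72d80375003d24fe022, 0x42d17d4332ec06c31123d37709b0660f951033d2a3023,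
  0x53015c46b05b45d4e50744d64125200ab11318242c024, 0xaa52104a4812d50a44a119755002b3ba54008553e025,
  0x560451490330631a71a81a906509c0e808a0790a9026, 0xa807a50a0f552c4bc12a1b71e857053344a560055027,
  0x58034951a0a702858034951a0a702858034951a0a7028, 0x2b825c11d3b60993c92522532e658938321228c58e029,
  0x5513ed54a0e457c57d1b612b11532a4c10b54962b702a, 0xc71fd44558b5863a61f83e32a90932b23dc1f23b902c,
  0x4b330234438e32732830b4085903244ee4382020c602d, 0x3150521c4cc2d22dc2182172dd2de2e14611d34b202e,
  0x14a0d429d2cb2cc10b2ee2f12f25753174f4125504032, 0xc31782ba06b2ed10c2381120ac2a738258a446062034,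
  0x2c72c805a46c57253d0863e83e93485812f52f60c2035, 0x2d94221dd3130a651b1373fc33c5112e41d71d82c6036,
  0x58404e05138d34553a0dd2672864560d926328250e038, 0x27e04d58558c51d515082277096517272273274583039,
  0x31a2ab1d24624531082c21572660de0b44c22620da03b, 0x2a122c29c0d551451e0fa2973730a32d629316731903c,
  0x13651c58d28d08c1f63c52353d52a516e1712ca29e043, 0x5715a50907b23c3121de1e12b64973eb4da1f4135044,
  0x56e44b22a22b2a233e24d24e2513ca4a5475288148046, 0x21521621916a49425e16516629419a46416921a56d047,
  0x22823a17b3e70873fa3a55871d62e52545130d6214048, 0x5224ba4d50753c73c809a37824224351934a226227049,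
  0x36235535620830a32911637c3060f806707120d38c052, 0x56141407808b28e29146722447a31512225b2b9179054,
  0x40540635912d1e530920920a0774152055a040a159058, 0x2c917225657b0e533911911a33643c578352391404059,
  0x4033925aa5742f31c32454b85a526a20c0724e445e05d, 0x6144735c0cd42932c35840730c30d36407d33340205e,
  0x35436330e06e06935436330e06e06935436330e06e069, 0x4e60f73073a90bc0c12f71770c410640e2960fb4e3073,
  0x20b26b3014b410338942542638614c4b11d42343c6076, 0x8151609756b1323993a24ec13d3953ad52534d33207e,
  0x54139413e0bb3aa37b1173e21f92e84d2492398133084, 0x50c3f43da4dd1941f13dd3de1db47d3d93f53f83f9088,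
  0xe913b49c55b2c51d92f92fa3812a83e43e50f450b089, 0x3b73b81f34db3bc3b445816c16d2a60ad4fc16256a098,
  0x5661ed4f72b44b72462472eb4343c33c41f73a70e709d, 0xa157a2574d12e93b13b23f73f63b33bd4c43f256509e,
  0x37440d1074543225b020735732d32e33134e3515790a2, 0xb141d0e354b4e20fc49b13c4ed32531d5551864fb0ae,
  0x43217e18111412c35a0d314b38738810411c25d4950b6, 0x44247733511b1050c520313a0ea0f33e617c42e4310b7,
  0x44e14310a2cd1b34720cc35d2321fc0c815543e4410b8, 0x34118a0cb47359c4e93d847e26515840b28a4831540c9,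
  0x5354a724b18c4f14f24f33181684652d448228b2130d7, 0x4573b511e12131657657743d1562c359a45b4495340d8,
  0x53b5a248c5965374c648850312615348445246319b0dc, 0x4e75b53cc4181024b54b62b51e24212da4eb3a352b0f6,
  0x4f55a850815b53153257146d5992c455c55d55e198124, 0x1294bd1b95582fd5933473ea49849938b20e211384128,
  0x13156c21b5065475684c85024895643f350d2831e412e, 0x54e3bb4dc3db2b34f84f94fa1872fc55952a3a43fb138,
  0x20441639749316b4595b349e37e18934237141a54d139, 0x1614fd3d34114d74d84d93ec5524ae22346846946a15d,
  0x2614c33be3c11bc2bc4ac5274cb21d2214874c7569163, 0x29927a2ad2591c22f458227539d27929a2e3512255173,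
  0x5565571ba4914d35b75465075a93935425922fe19d185, 0x1912495bd48e2695a656348a59846e4711b44a94aa18e,
  0x4de4e154c41b1ec5675484ca5285b95445ad5243ae193, 0x4a24a34a43cb5b64d44bb52d52e4135625a74f61ee196,
  0x2ce2d14cd39b3d15014c95493ee3f14c553855431e1b2, 0x57e1e91ea33b3fd40133447847922534b5bc24a4a81b5,
  0x1d12ac27b1fb2331d55882e71fa27c26e2715182441c4, 0x5b15b245a59b4744a653659748b5a35a44b95235ae206,
  0x5915435ba5bb34c5264ad55353934659459548d5be323, 0x5a153c5735ab5ac5455b852955a49d5b44e859d59e409]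

def look (T i : ℕ) : ℕ := Nat.land (Nat.shiftRight T (Nat.mul 8 i)) 255
def xp (k i : ℕ) : ℕ := look XS (Nat.add (look XI i) (Nat.mod k 15))
def yf (i : ℕ) : ℕ := look YT i
def adj (i j : ℕ) : Bool := Nat.beq (Nat.land (Nat.shiftRight AJ (Nat.add (Nat.mul 85 i) j)) 1) 1
def ev (l : List ℕ) (p : ℕ) : ℕ := l.foldr (fun a q => xp a (yf q)) (yf p)
def allb : ℕ → (ℕ → Bool) → Bool
  | 0, _ => true
  | n + 1, f => f n && allb n f

theorem allb_spec {n : ℕ} {f : ℕ → Bool} (h : allb n f = true) : ∀ i < n, f i = true := by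
  induction n with
  | zero => intro i hi; omega
  | succ n ih =>
    simp only [allb, Bool.and_eq_true] at h
    intro i hi
    rcases Nat.lt_succ_iff_lt_or_eq.mp hi with h' | rfl
    · exact ih h.2 i h'
    · exact h.1

theorem beq_iff {a b : ℕ} : Nat.beq a b = true ↔ a = b :=
  ⟨Nat.eq_of_beq_eq_true, fun h => by subst h; exact Nat.beq_refl a⟩

/-! ### cycle types -/

theorem ctype (cs : List (List (Fin 85))) (h1 : ∀ l ∈ cs, 2 ≤ l.length)
    (h2 : cs.flatten.Nodup) : (permOfCycles cs).cycleType = ↑(cs.map List.length) := by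
  rw [List.nodup_flatten] at h2
  rw [permOfCycles, Equiv.Perm.cycleType_eq (cs.map List.formPerm) rfl]
  · rw [List.map_map]
    congr 1
    apply List.map_congr_left
    intro l hl
    have hn := h2.1 l hl
    have h3 := h1 l hl
    simp only [Function.comp]
    rw [List.support_formPerm_of_nodup l hn, List.toFinset_card_of_nodup hn]
    rintro a rfl
    simp at h3
  · intro s hs
    obtain ⟨l, hl, rfl⟩ := List.mem_map.mp hs
    exact List.isCycle_formPerm (h2.1 l hl) (h1 l hl)
  · rw [List.pairwise_map]
    refine List.Pairwise.imp_of_mem ?_ h2.2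
    intro a b ha hb hab
    exact (List.formPerm_disjoint_iff (h2.1 a ha) (h2.1 b hb) (h1 a ha) (h1 b hb)).2 hab

theorem x_type : x.cycleType = Multiset.replicate 5 15 + Multiset.replicate 2 5 := by
  rw [x, ctype _ (by decide +kernel) (by decide +kernel)]
  decide +kernel

theorem y_type : y.cycleType = Multiset.replicate 35 2 := by
  rw [y, ctype _ (by decide +kernel) (by decide +kernel)]
  decide +kernel

theorem x_val : ∀ p : Fin 85, (x p).val = xp 1 p.val := by decide +kernel
theorem y_val : ∀ p : Fin 85, (y p).val = yf p.val := by decide +kernel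

theorem z_eq : (x * y)⁻¹ = permOfCycles zc := by
  have h : ∀ p : Fin 85, xp 1 (yf (permOfCycles zc p).val) = p.val := by decide +kernel
  rw [inv_eq_iff_mul_eq_one]
  ext p
  rw [Perm.mul_apply, Perm.mul_apply, x_val, y_val, h]
  rfl

theorem z_type : ((x * y)⁻¹).cycleType = Multiset.replicate 16 4 + Multiset.replicate 7 2 := by
  rw [z_eq, ctype _ (by decide +kernel) (by decide +kernel)]
  decide +kernel

/-! ### words -/

theorem yy : y * y = 1 := by
  have h : ∀ p : Fin 85, yf (yf p.val) = p.val := by decide +kernel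
  ext p
  rw [Perm.mul_apply, y_val, y_val, h]
  rfl

theorem yinv : y⁻¹ = y := inv_eq_of_mul_eq_one_left yy

theorem x_pow_lt : ∀ k < 15, ∀ p : Fin 85, ((x ^ k) p).val = xp k p.val := by
  have h0 : ∀ p : Fin 85, xp 0 p.val = p.val := by decide +kernel
  have h1 : ∀ k < 14, (fun k => allb 85 fun i => Nat.beq (xp 1 (xp k i)) (xp (k + 1) i)) k = true :=
    allb_spec (by decide +kernel)
  intro k
  induction k with
  | zero => intro _ p; rw [h0]; rfl
  | succ k ih =>
    intro hk p
    rw [pow_succ', Perm.mul_apply, x_val, ih (by omega)]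
    exact beq_iff.1 (allb_spec (h1 k (by omega)) p.val p.isLt)

attribute [local irreducible] x y

theorem x15 : x ^ 15 = 1 := by
  have h : ∀ p : Fin 85, xp 1 (xp 14 p.val) = p.val := by decide +kernel
  ext p
  rw [pow_succ', Perm.mul_apply, x_val, x_pow_lt 14 (by norm_num), h]
  rfl

theorem x_pow (k : ℕ) (p : Fin 85) : ((x ^ k) p).val = xp k p.val := by
  have : x ^ k = x ^ (k % 15) := by
    conv_lhs => rw [← Nat.div_add_mod k 15, pow_add, pow_mul, x15, one_pow, one_mul]
  rw [this, x_pow_lt _ (Nat.mod_lt _ (by norm_num))]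
  unfold xp
  congr 2
  exact Nat.mod_mod k 15

def M (l : List ℕ) : Perm (Fin 85) := (l.map fun a => x ^ a * y).prod
def W (l : List ℕ) : Perm (Fin 85) := M l * y

theorem W_cons (a : ℕ) (l : List ℕ) : W (a :: l) = x ^ a * y * W l := by
  simp [W, M, mul_assoc]

theorem W_val (l : List ℕ) (p : Fin 85) : (W l p).val = ev l p.val := by
  induction l with
  | nil => simp [W, M, ev, y_val]
  | cons a l ih =>
    rw [W_cons, Perm.mul_apply, Perm.mul_apply, x_pow, y_val, ih]
    rfl

abbrev GG : Subgroup (Perm (Fin 85)) := Subgroup.closure {x, y}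

theorem x_mem : x ∈ GG := Subgroup.subset_closure (by simp)
theorem y_mem : y ∈ GG := Subgroup.subset_closure (by simp)

theorem W_mem (l : List ℕ) : W l ∈ GG := by
  induction l with
  | nil => simpa [W, M] using y_mem
  | cons a l ih =>
    rw [W_cons]
    exact mul_mem (mul_mem (pow_mem x_mem a) y_mem) ih

/-! ### the graph -/

theorem ainv (g : Perm (Fin 85)) (p : Fin 85) : g (g⁻¹ p) = p := by
  rw [← Perm.mul_apply, mul_inv_cancel]; rfl

theorem inva (g : Perm (Fin 85)) (p : Fin 85) : g⁻¹ (g p) = p := by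
  rw [← Perm.mul_apply, inv_mul_cancel]; rfl


theorem GG_ind {p : Perm (Fin 85) → Prop} (hx : p x) (hy : p y) (h1 : p 1)
    (hm : ∀ a b, p a → p b → p (a * b)) (hi : ∀ a, p a → p a⁻¹) : ∀ g ∈ GG, p g := by
  intro g hg
  induction hg using Subgroup.closure_induction with
  | mem a ha =>
    rcases ha with rfl | rfl
    · exact hx
    · exact hy
  | one => exact h1
  | mul a b _ _ ha hb => exact hm a b ha hb
  | inv a _ ha => exact hi a ha

theorem pres : ∀ g ∈ GG, ∀ i j : Fin 85, adj (g i).val (g j).val = adj i.val j.val := by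
  have hx : ∀ i < 85, (fun i => allb 85 fun j => adj (xp 1 i) (xp 1 j) == adj i j) i = true :=
    allb_spec (by decide +kernel)
  have hy : ∀ i < 85, (fun i => allb 85 fun j => adj (yf i) (yf j) == adj i j) i = true :=
    allb_spec (by decide +kernel)
  apply GG_ind
  · intro i j
    rw [x_val, x_val]
    exact beq_iff_eq.1 (allb_spec (hx i.val i.isLt) j.val j.isLt)
  · intro i j
    rw [y_val, y_val]
    exact beq_iff_eq.1 (allb_spec (hy i.val i.isLt) j.val j.isLt)
  · intro i j; rfl
  · intro a b ha hb i j
    rw [Perm.mul_apply, Perm.mul_apply, ha, hb]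
  · intro a ha i j
    rw [← ha, ainv, ainv]

def ok (F : List ℕ) (p : ℕ) : Bool :=
  allb 85 fun q => Nat.beq q p || F.any fun f => (adj f p != adj f q) || Nat.beq f q

def FixL (g : Perm (Fin 85)) (F : List ℕ) : Prop := ∀ p : Fin 85, p.val ∈ F → g p = p

theorem FixL.append {g : Perm (Fin 85)} {F E : List ℕ} (h1 : FixL g F) (h2 : FixL g E) :
    FixL g (F ++ E) := by
  intro p hp
  rcases List.mem_append.1 hp with h | h
  · exact h1 p h
  · exact h2 p h

theorem fix_step {g : Perm (Fin 85)} (hg : g ∈ GG) {F E : List ℕ} (hF : FixL g F)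
    (hl : F.all (fun f => Nat.ble f 84) = true) (h : E.all (ok F) = true) : FixL g E := by
  intro p hp
  have h1 := allb_spec (List.all_eq_true.1 h p.val hp) (g p).val (g p).isLt
  rcases Bool.or_eq_true_iff.1 h1 with h2 | h2
  · exact Fin.ext (beq_iff.1 h2)
  · obtain ⟨f, hf, h3⟩ := List.any_eq_true.1 h2
    have hf' : f ≤ 84 := Nat.le_of_ble_eq_true (List.all_eq_true.1 hl f hf)
    have hgf : g ⟨f, by omega⟩ = ⟨f, by omega⟩ := hF ⟨f, by omega⟩ hf
    rcases Bool.or_eq_true_iff.1 h3 with h4 | h4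
    · exfalso
      have := pres g hg ⟨f, by omega⟩ p
      rw [hgf] at this
      simp only at this
      rw [this] at h4
      simp at h4
    · have h5 : g p = g ⟨f, by omega⟩ := by
        rw [hgf]; exact Fin.ext (beq_iff.1 h4).symm
      have h6 := g.injective h5
      rw [h6, hgf]

theorem base {g : Perm (Fin 85)} (hg : g ∈ GG) (h : FixL g BS) : g = 1 := by
  have h1 : FixL g R1 := fix_step hg h (by decide +kernel) (by decide +kernel)
  have h2 : FixL g R2 := fix_step hg (h.append h1) (by decide +kernel) (by decide +kernel)
  have h3 : FixL g R3 := fix_step hg ((h.append h1).append h2) (by decide +kernel) (by decide +kernel)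
  have h4 : ∀ p : Fin 85, p.val ∈ ((BS ++ R1) ++ R2) ++ R3 := by decide +kernel
  ext p
  rw [(((h.append h1).append h2).append h3) p (h4 p)]
  rfl

theorem eq_of_base {g h : Perm (Fin 85)} (hg : g ∈ GG) (hh : h ∈ GG)
    (H : ∀ p : Fin 85, p.val ∈ BS → g p = h p) : g = h := by
  have : h⁻¹ * g = 1 := by
    apply base (mul_mem (inv_mem hh) hg)
    intro p hp
    rw [Perm.mul_apply, H p hp, inva]
  exact (inv_mul_eq_one.1 this).symm

/-! ### the order -/

def HF (F : List ℕ) : Subgroup (Perm (Fin 85)) where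
  carrier := {g | g ∈ GG ∧ FixL g F}
  one_mem' := ⟨one_mem _, fun _ _ => rfl⟩
  mul_mem' := by
    rintro a b ⟨ha, ha'⟩ ⟨hb, hb'⟩
    refine ⟨mul_mem ha hb, fun p hp => ?_⟩
    rw [Perm.mul_apply, hb' p hp, ha' p hp]
  inv_mem' := by
    rintro a ⟨ha, ha'⟩
    refine ⟨inv_mem ha, fun p hp => ?_⟩
    rw [Perm.inv_eq_iff_eq, ha' p hp]

theorem mem_HF {F : List ℕ} {g : Perm (Fin 85)} : g ∈ HF F ↔ g ∈ GG ∧ FixL g F := Iff.rfl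

def pat (F : List ℕ) (b q : ℕ) : Bool :=
  F.all fun f => (adj f q == adj f b) && !(Nat.beq f q)

def fixc (F : List ℕ) (ws : List (List ℕ)) : Bool :=
  ws.all fun w => F.all fun f => Nat.beq (ev w f) f

def hit (F : List ℕ) (b : ℕ) (ws : List (List ℕ)) : Bool :=
  allb 85 fun q => !(pat F b q) || ws.any fun w => Nat.beq (ev w b) q

theorem fixc_spec {F : List ℕ} {ws : List (List ℕ)} (h : fixc F ws = true) :
    ∀ w ∈ ws, FixL (W w) F := by
  intro w hw p hp
  apply Fin.ext
  rw [W_val]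
  exact beq_iff.1 (List.all_eq_true.1 (List.all_eq_true.1 h w hw) p.val hp)

theorem hit_spec {F : List ℕ} {b : Fin 85} {ws : List (List ℕ)} (h : hit F b ws = true)
    (q : Fin 85) (hq : pat F b q = true) : ∃ w ∈ ws, W w b = q := by
  have h1 := allb_spec h q.val q.isLt
  simp only [hq, Bool.not_true, Bool.false_or] at h1
  obtain ⟨w, hw, h2⟩ := List.any_eq_true.1 h1
  exact ⟨w, hw, Fin.ext (by rw [W_val]; exact beq_iff.1 h2)⟩

theorem pat_of {F : List ℕ} {b : Fin 85} (hl : F.all (fun f => Nat.ble f 84) = true)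
    (hb : b.val ∉ F) {g : Perm (Fin 85)} (hg : g ∈ GG) (hF : FixL g F) :
    pat F b (g b) = true := by
  apply List.all_eq_true.2
  intro f hf
  have hf' : f ≤ 84 := Nat.le_of_ble_eq_true (List.all_eq_true.1 hl f hf)
  have hgf : g ⟨f, by omega⟩ = ⟨f, by omega⟩ := hF ⟨f, by omega⟩ hf
  have := pres g hg ⟨f, by omega⟩ b
  rw [hgf] at this
  simp only at this
  rw [this]
  simp only [BEq.rfl, Bool.true_and, Bool.not_eq_true']
  rw [← Bool.not_eq_true, beq_iff]
  intro h
  have h2 : g b = g ⟨f, by omega⟩ := by rw [hgf]; exact Fin.ext h.symm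
  have h3 := g.injective h2
  apply hb
  rw [h3]
  exact hf

theorem step (F : List ℕ) (b : Fin 85) (ws : List (List ℕ)) (n : ℕ)
    (hl : F.all (fun f => Nat.ble f 84) = true) (hb : b.val ∉ F)
    (h1 : fixc F ws = true) (h2 : hit F b ws = true)
    (h3 : (Finset.univ.filter fun q : Fin 85 => pat F b q = true).card = n) :
    Nat.card (HF F) = n * Nat.card (HF (b.val :: F)) := by
  have e1 := Nat.card_congr (MulAction.orbitProdStabilizerEquivGroup (HF F) b)
  rw [Nat.card_prod] at e1
  rw [← e1]
  congr 1
  · have : MulAction.orbit (HF F) b = ↑(Finset.univ.filter fun q : Fin 85 => pat F b q = true) := by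
      ext q
      simp only [Finset.coe_filter, Finset.mem_univ, true_and, Set.mem_ofPred_eq]
      constructor
      · rintro ⟨⟨g, hg⟩, rfl⟩
        exact pat_of hl hb hg.1 hg.2
      · intro hq
        obtain ⟨w, hw, h⟩ := hit_spec h2 q hq
        exact ⟨⟨W w, W_mem w, fixc_spec h1 w hw⟩, h⟩
    rw [this, Nat.card_coe_set_eq, Set.ncard_coe_finset, h3]
  · refine Nat.card_congr ⟨fun g => ⟨g.1.1, g.1.2.1, ?_⟩, fun g => ⟨⟨g.1, g.2.1, ?_⟩, ?_⟩, ?_, ?_⟩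
    · intro p hp
      rcases List.mem_cons.1 hp with h | h
      · rw [Fin.ext h]; exact g.2
      · exact g.1.2.2 p h
    · intro p hp
      exact g.2.2 p (List.mem_cons_of_mem _ hp)
    · exact g.2.2 b List.mem_cons_self
    · intro g; rfl
    · intro g; rfl

theorem card_GG : Nat.card GG = 1958400 := by
  have h0 : HF [] = GG := by
    ext g
    rw [mem_HF]
    exact ⟨fun h => h.1, fun h => ⟨h, fun p hp => by simp at hp⟩⟩
  have e0 := step [] 0 L0 85 (by decide +kernel) (by decide +kernel) (by decide +kernel)
    (by decide +kernel) (by decide +kernel)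
  have e1 := step [0] 1 L1 64 (by decide +kernel) (by decide +kernel) (by decide +kernel)
    (by decide +kernel) (by decide +kernel)
  have e2 := step [1, 0] 10 L2 5 (by decide +kernel) (by decide +kernel) (by decide +kernel)
    (by decide +kernel) (by decide +kernel)
  have e3 := step [10, 1, 0] 37 L3 4 (by decide +kernel) (by decide +kernel) (by decide +kernel)
    (by decide +kernel) (by decide +kernel)
  have e4 := step [37, 10, 1, 0] 4 L4 3 (by decide +kernel) (by decide +kernel) (by decide +kernel)
    (by decide +kernel) (by decide +kernel)
  have e5 := step [4, 37, 10, 1, 0] 8 L5 3 (by decide +kernel) (by decide +kernel)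
    (by decide +kernel) (by decide +kernel) (by decide +kernel)
  have e6 := step [8, 4, 37, 10, 1, 0] 22 L6 2 (by decide +kernel) (by decide +kernel)
    (by decide +kernel) (by decide +kernel) (by decide +kernel)
  have e7 : HF [22, 8, 4, 37, 10, 1, 0] = ⊥ := by
    rw [eq_bot_iff]
    intro g hg
    rw [Subgroup.mem_bot]
    apply base hg.1
    have : ∀ p : Fin 85, p.val ∈ BS → p.val ∈ [22, 8, 4, 37, 10, 1, 0] := by decide +kernel
    exact fun p hp => hg.2 p (this p hp)
  rw [h0] at e0
  have e7' : Nat.card (HF [22, 8, 4, 37, 10, 1, 0]) = 1 := by rw [e7]; simp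
  rw [e0]
  erw [e1, e2, e3, e4, e5, e6, e7']

/-! ### the index two subgroup -/

abbrev SS : Subgroup (Perm (Fin 85)) := Subgroup.closure {x, y * x * y}

theorem SS_x : x ∈ SS := Subgroup.subset_closure (by simp)
theorem SS_yxy : y * x * y ∈ SS := Subgroup.subset_closure (by simp)

theorem SS_le : SS ≤ GG := by
  rw [Subgroup.closure_le]
  rintro a (rfl | rfl)
  · exact x_mem
  · exact mul_mem (mul_mem y_mem x_mem) y_mem

theorem yxpy (k : ℕ) : y * x ^ k * y = (y * x * y) ^ k := by
  have h : y * x ^ k * y⁻¹ = (y * x * y⁻¹) ^ k := by rw [conj_pow]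
  rwa [yinv] at h

theorem W_SS : ∀ l : List ℕ, l.length % 2 = 1 → W l ∈ SS
  | [], h => by simp at h
  | [a], _ => by
    have : W [a] = x ^ a := by simp [W, M, mul_assoc, yy]
    rw [this]
    exact pow_mem SS_x a
  | a :: b :: l, h => by
    have h1 : W (a :: b :: l) = x ^ a * (y * x * y) ^ b * W l := by
      rw [W_cons, W_cons, ← yxpy]
      simp only [mul_assoc]
    rw [h1]
    refine mul_mem (mul_mem (pow_mem SS_x a) (pow_mem SS_yxy b)) (W_SS l ?_)
    simp only [List.length_cons] at h
    omega

theorem SS_conj_y : ∀ s ∈ SS, y * s * y ∈ SS := by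
  intro s hs
  induction hs using Subgroup.closure_induction with
  | mem a ha =>
    rcases ha with rfl | rfl
    · exact SS_yxy
    · have : y * (y * x * y) * y = x := by
        rw [← mul_assoc, ← mul_assoc, yy, one_mul, mul_assoc, yy, mul_one]
      rw [this]
      exact SS_x
  | one => rw [mul_one, yy]; exact one_mem _
  | mul a b _ _ ha hb =>
    have : y * (a * b) * y = (y * a * y) * (y * b * y) := by
      calc y * (a * b) * y = y * a * 1 * b * y := by group
        _ = _ := by rw [← yy]; simp only [mul_assoc]
    rw [this]
    exact mul_mem ha hb
  | inv a _ ha =>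
    have : y * a⁻¹ * y = (y * a * y)⁻¹ := by
      rw [mul_inv_rev, mul_inv_rev, yinv, mul_assoc]
    rw [this]
    exact inv_mem ha

theorem SS_conj {g : Perm (Fin 85)} (hg : g ∈ GG) : ∀ s ∈ SS, g * s * g⁻¹ ∈ SS := by
  have key : ∀ g ∈ GG, (∀ s ∈ SS, g * s * g⁻¹ ∈ SS) ∧ (∀ s ∈ SS, g⁻¹ * s * g ∈ SS) := by
    apply GG_ind
    · exact ⟨fun s hs => mul_mem (mul_mem SS_x hs) (inv_mem SS_x),
        fun s hs => mul_mem (mul_mem (inv_mem SS_x) hs) SS_x⟩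
    · rw [yinv]
      exact ⟨SS_conj_y, SS_conj_y⟩
    · simp
    · rintro a b ⟨ha, ha'⟩ ⟨hb, hb'⟩
      refine ⟨fun s hs => ?_, fun s hs => ?_⟩
      · have := ha _ (hb s hs)
        simpa [mul_assoc] using this
      · have := hb' _ (ha' s hs)
        simpa [mul_assoc] using this
    · rintro a ⟨ha, ha'⟩
      exact ⟨by simpa using ha', by simpa using ha⟩
  exact (key g hg).1

/-! ### primitivity -/

theorem SS_trans (q : Fin 85) : ∃ w ∈ L0, W w ∈ SS ∧ W w 0 = q := by
  have h1 : hit [] (0 : Fin 85) L0 = true := by decide +kernel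
  have h2 : ∀ w ∈ L0, w.length % 2 = 1 := by decide +kernel
  obtain ⟨w, hw, h⟩ := hit_spec h1 q rfl
  exact ⟨w, hw, W_SS w (h2 w hw), h⟩

theorem SS_non (q : Fin 85) (h0 : q ≠ 0) (ha : adj 0 q = false) :
    ∃ g ∈ SS, g 0 = 0 ∧ g 1 = q := by
  have h1 : hit [0] (1 : Fin 85) L1 = true := by decide +kernel
  have h2 : ∀ w ∈ L1, w.length % 2 = 1 := by decide +kernel
  have h3 : fixc [0] L1 = true := by decide +kernel
  have h5 : ∀ q : Fin 85, q ≠ 0 → adj 0 q = false → pat [0] (1 : Fin 85) q = true := by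
    decide +kernel
  obtain ⟨w, hw, h⟩ := hit_spec h1 q (h5 q h0 ha)
  exact ⟨W w, W_SS w (h2 w hw), fixc_spec h3 w hw 0 (by simp), h⟩

theorem SS_adj (q : Fin 85) (ha : adj 0 q = true) : ∃ g ∈ SS, g 0 = 0 ∧ g 10 = q := by
  have h1 : hit [0] (10 : Fin 85) LA = true := by decide +kernel
  have h2 : ∀ w ∈ LA, w.length % 2 = 1 := by decide +kernel
  have h3 : fixc [0] LA = true := by decide +kernel
  have h5 : ∀ q : Fin 85, adj 0 q = true → pat [0] (10 : Fin 85) q = true := by decide +kernel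
  obtain ⟨w, hw, h⟩ := hit_spec h1 q (h5 q ha)
  exact ⟨W w, W_SS w (h2 w hw), fixc_spec h3 w hw 0 (by simp), h⟩

theorem trans_of {K : Subgroup (Perm (Fin 85))} (hK : SS ≤ K) :
    MulAction.IsPretransitive K (Fin 85) := by
  rw [MulAction.isPretransitive_iff_base (0 : Fin 85)]
  intro q
  obtain ⟨w, -, h1, h2⟩ := SS_trans q
  exact ⟨⟨W w, hK h1⟩, h2⟩

open Pointwise in
theorem block0 {K : Subgroup (Perm (Fin 85))} (hK : SS ≤ K) {B : Set (Fin 85)}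
    (hB : MulAction.IsBlock K B) (h0 : (0 : Fin 85) ∈ B) (h1 : ∃ q ∈ B, q ≠ 0) :
    B = Set.univ := by
  have : MulAction.IsPretransitive K (Fin 85) := trans_of hK
  have st : ∀ g ∈ SS, g 0 = 0 → ∀ q, g q ∈ B ↔ q ∈ B := by
    intro g hg hg0 q
    have e : (⟨g, hK hg⟩ : K) • B = B :=
      (MulAction.isBlock_iff_smul_eq_of_mem.1 hB) h0 (by
        change g 0 ∈ B
        rw [hg0]; exact h0)
    have := Set.smul_mem_smul_set_iff (a := (⟨g, hK hg⟩ : K)) (s := B) (x := q)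
    rw [e] at this
    exact this
  by_cases hn : ∃ q ∈ B, q ≠ 0 ∧ adj 0 q = false
  · obtain ⟨q, hq, hq0, hqa⟩ := hn
    have h1B : (1 : Fin 85) ∈ B := by
      obtain ⟨g, hg, hg0, hg1⟩ := SS_non q hq0 hqa
      rw [← st g hg hg0, hg1]; exact hq
    apply MulAction.IsBlock.eq_univ_of_card_lt hB
    have hsub : ((Finset.univ.filter fun q : Fin 85 => adj 0 q = false : Finset (Fin 85)) :
        Set (Fin 85)) ⊆ B := by
      intro r hr
      simp only [Finset.coe_filter, Finset.mem_univ, true_and, Set.mem_ofPred_eq] at hr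
      by_cases hr0 : r = 0
      · rw [hr0]; exact h0
      · obtain ⟨g, hg, hg0, hg1⟩ := SS_non r hr0 hr
        rw [← hg1, st g hg hg0]; exact h1B
    have hc := Set.ncard_le_ncard hsub (Set.toFinite B)
    rw [Set.ncard_coe_finset] at hc
    have hc' : (Finset.univ.filter fun q : Fin 85 => adj 0 q = false).card = 65 := by
      decide +kernel
    rw [hc'] at hc
    rw [Nat.card_fin]
    omega
  · exfalso
    push Not at hn
    obtain ⟨q, hq, hq0⟩ := h1
    have hqa : adj 0 q = true := by simpa using hn q hq hq0
    have h1B : (10 : Fin 85) ∈ B := by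
      obtain ⟨g, hg, hg0, hg1⟩ := SS_adj q hqa
      rw [← st g hg hg0, hg1]; exact hq
    have hBe : B = ((Finset.univ.filter fun q : Fin 85 => q = 0 ∨ adj 0 q = true :
        Finset (Fin 85)) : Set (Fin 85)) := by
      ext r
      simp only [Finset.coe_filter, Finset.mem_univ, true_and, Set.mem_ofPred_eq]
      constructor
      · intro hr
        by_cases hr0 : r = 0
        · exact Or.inl hr0
        · exact Or.inr (by simpa using hn r hr hr0)
      · rintro (rfl | hr)
        · exact h0
        · obtain ⟨g, hg, hg0, hg1⟩ := SS_adj r hr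
          rw [← hg1, st g hg hg0]; exact h1B
    have hd := MulAction.IsBlock.ncard_dvd_card hB ⟨0, h0⟩
    have hc' : (Finset.univ.filter fun q : Fin 85 => q = 0 ∨ adj 0 q = true).card = 21 := by
      decide +kernel
    rw [hBe, Set.ncard_coe_finset, hc', Nat.card_fin] at hd
    omega

open Pointwise in
theorem prim_of {K : Subgroup (Perm (Fin 85))} (hK : SS ≤ K) :
    MulAction.IsPreprimitive K (Fin 85) := by
  have : MulAction.IsPretransitive K (Fin 85) := trans_of hK
  refine { isTrivialBlock_of_isBlock := ?_ }
  intro B hB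
  by_cases hs : B.Subsingleton
  · exact Or.inl hs
  · rw [Set.not_subsingleton_iff] at hs
    obtain ⟨a, ha, b, hb, hab⟩ := hs
    obtain ⟨g, hg⟩ := MulAction.exists_smul_eq K a (0 : Fin 85)
    have h2 : g • B = Set.univ := by
      apply block0 hK (hB.translate g)
      · exact ⟨a, ha, hg⟩
      · refine ⟨g • b, ⟨b, hb, rfl⟩, ?_⟩
        rw [← hg]
        exact fun h => hab (MulAction.injective g h).symm
    exact (MulAction.IsTrivialBlock.smul_iff g).1 (Or.inr h2)

/-! ### elations and simplicity -/

def TT (a : Fin 85) : Subgroup (Perm (Fin 85)) where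
  carrier := {g | g ∈ SS ∧ ∀ p : Fin 85, (p = a ∨ adj a p = true) → g p = p}
  one_mem' := ⟨one_mem _, fun _ _ => rfl⟩
  mul_mem' := by
    rintro a b ⟨ha, ha'⟩ ⟨hb, hb'⟩
    refine ⟨mul_mem ha hb, fun p hp => ?_⟩
    rw [Perm.mul_apply, hb' p hp, ha' p hp]
  inv_mem' := by
    rintro a ⟨ha, ha'⟩
    refine ⟨inv_mem ha, fun p hp => ?_⟩
    rw [Perm.inv_eq_iff_eq, ha' p hp]

theorem TT_conj {g : Perm (Fin 85)} (hg : g ∈ GG) {a : Fin 85} {t : Perm (Fin 85)}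
    (ht : t ∈ TT a) : g * t * g⁻¹ ∈ TT (g a) := by
  refine ⟨SS_conj hg t ht.1, fun p hp => ?_⟩
  have : t (g⁻¹ p) = g⁻¹ p := by
    apply ht.2
    rcases hp with rfl | hp
    · left; rw [inva]
    · right; rw [← pres g hg, ainv]; exact hp
  rw [Perm.mul_apply, Perm.mul_apply, this, ainv]

def perp0 : List ℕ := (List.range 85).filter fun p => Nat.beq p 0 || adj 0 p

theorem TS_TT : ∀ t ∈ TS, W t ∈ TT 0 := by
  have h1 : ∀ w ∈ TS, w.length % 2 = 1 := by decide +kernel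
  have h2 : fixc perp0 TS = true := by decide +kernel
  have h3 : ∀ p : Fin 85, (p = 0 ∨ adj 0 p = true) → p.val ∈ perp0 := by decide +kernel
  intro t ht
  exact ⟨W_SS t (h1 t ht), fun p hp => fixc_spec h2 t ht p (h3 p hp)⟩

theorem TT_TS {g : Perm (Fin 85)} (hg : g ∈ TT 0) : ∃ t ∈ TS, g = W t := by
  have h1 : hit perp0 (1 : Fin 85) TS = true := by decide +kernel
  have h2 : perp0.all (fun f => Nat.ble f 84) = true := by decide +kernel
  have h3 : ∀ p : Fin 85, p.val ∈ perp0 → (p = 0 ∨ adj 0 p = true) := by decide +kernel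
  have h4 : ∀ p : Fin 85, p.val ∈ BS → p = 1 ∨ (p = 0 ∨ adj 0 p = true) := by decide +kernel
  have h5 : (1 : Fin 85).val ∉ perp0 := by decide +kernel
  obtain ⟨t, ht, h⟩ := hit_spec h1 (g 1)
    (pat_of h2 h5 (SS_le hg.1) (fun p hp => hg.2 p (h3 p hp)))
  refine ⟨t, ht, eq_of_base (SS_le hg.1) (W_mem t) ?_⟩
  intro p hp
  rcases h4 p hp with rfl | h6
  · exact h.symm
  · rw [hg.2 p h6, (TS_TT t ht).2 p h6]

theorem W_eq {u v : List (List ℕ)} (h : (BS.all fun b => Nat.beq (u.foldr ev b) (v.foldr ev b)) = true) :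
    (u.map W).prod = (v.map W).prod := by
  have key : ∀ (u : List (List ℕ)) (p : Fin 85), ((u.map W).prod p).val = u.foldr ev p.val := by
    intro u p
    induction u with
    | nil => rfl
    | cons a l ih => rw [List.map_cons, List.prod_cons, Perm.mul_apply, W_val, ih]; rfl
  have mem : ∀ u : List (List ℕ), (u.map W).prod ∈ GG := by
    intro u
    apply list_prod_mem
    intro g hg
    obtain ⟨l, -, rfl⟩ := List.mem_map.1 hg
    exact W_mem l
  apply eq_of_base (mem u) (mem v)
  intro p hp
  apply Fin.ext
  rw [key, key]
  exact beq_iff.1 (List.all_eq_true.1 h p.val hp)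

theorem TS_comm : ∀ s ∈ TS, ∀ t ∈ TS, W s * W t = W t * W s := by
  have h : ∀ s ∈ TS, ∀ t ∈ TS,
      (BS.all fun b => Nat.beq ([s, t].foldr ev b) ([t, s].foldr ev b)) = true := by
    decide +kernel
  intro s hs t ht
  simpa using W_eq (h s hs t ht)

theorem TT_comm (a : Fin 85) : ∀ g ∈ TT a, ∀ h ∈ TT a, g * h = h * g := by
  obtain ⟨w, -, hw, rfl⟩ := SS_trans a
  intro g hg h hh
  have e : (W w)⁻¹ (W w 0) = 0 := inva _ _
  have hg' := TT_conj (inv_mem (W_mem w)) hg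
  have hh' := TT_conj (inv_mem (W_mem w)) hh
  rw [e] at hg' hh'
  obtain ⟨s, hs, es⟩ := TT_TS hg'
  obtain ⟨t, ht, et⟩ := TT_TS hh'
  have := TS_comm s hs t ht
  rw [← es, ← et] at this
  have h2 : W w * ((W w)⁻¹ * g * (W w)⁻¹⁻¹ * ((W w)⁻¹ * h * (W w)⁻¹⁻¹)) * (W w)⁻¹ =
    W w * ((W w)⁻¹ * h * (W w)⁻¹⁻¹ * ((W w)⁻¹ * g * (W w)⁻¹⁻¹)) * (W w)⁻¹ := by rw [this]
  simpa [mul_assoc] using h2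

theorem W1 (a : ℕ) : W [a] = x ^ a := by simp [W, M, mul_assoc, yy]

def winv (l : List ℕ) : List ℕ := (l.map fun a => 15 - a).reverse

theorem x_prod : ∃ l : List (Perm (Fin 85)), (∀ g ∈ l, ∃ a, g ∈ TT a) ∧ x = l.prod := by
  have h1 : ∀ e ∈ XE, e.2 ∈ TS := by decide +kernel
  have h2 : ∀ e ∈ XE, (BS.all fun b => Nat.beq ([e.1, winv e.1].foldr ev b) ([[0]].foldr ev b)) = true := by
    decide +kernel
  have h3 : (BS.all fun b => Nat.beq ([[1]].foldr ev b)
      ((XE.flatMap fun e => [e.1, e.2, winv e.1]).foldr ev b)) = true := by decide +kernel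
  refine ⟨XE.map fun e => W e.1 * W e.2 * (W e.1)⁻¹, ?_, ?_⟩
  · intro g hg
    obtain ⟨e, he, rfl⟩ := List.mem_map.1 hg
    exact ⟨_, TT_conj (W_mem _) (TS_TT _ (h1 e he))⟩
  · have h4 := W_eq h3
    have h5 : ∀ e ∈ XE, (W e.1)⁻¹ = W (winv e.1) := by
      intro e he
      have := W_eq (h2 e he)
      simp only [List.map_cons, List.map_nil, List.prod_cons, List.prod_nil, mul_one, W1,
        pow_zero] at this
      exact inv_eq_of_mul_eq_one_right this
    simp only [List.map_cons, List.map_nil, List.prod_cons, List.prod_nil, mul_one, W1,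
        pow_one] at h4
    have h6 : XE.map (fun e => W e.1 * W e.2 * (W e.1)⁻¹) =
        XE.map (fun e => W e.1 * W e.2 * W (winv e.1)) :=
      List.map_congr_left fun e he => by rw [h5 e he]
    rw [h4, h6]
    clear h1 h2 h3 h4 h5 h6
    generalize XE = l
    induction l with
    | nil => rfl
    | cons e l ih =>
      rw [List.flatMap_cons, List.map_append, List.prod_append, ih, List.map_cons, List.prod_cons]
      simp [mul_assoc]

theorem le_of_conj (N : Subgroup (Perm (Fin 85))) (h : x ∈ N) (h' : y * x * y⁻¹ ∈ N) : SS ≤ N := by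
  rw [yinv] at h'
  rw [Subgroup.closure_le]
  rintro a (rfl | rfl)
  · exact h
  · exact h'

theorem top_of_map (N : Subgroup SS) (h : SS ≤ N.map SS.subtype) : N = ⊤ := by
  rw [eq_top_iff]
  rintro ⟨s, hs⟩ -
  obtain ⟨t, ht, h2⟩ := h hs
  have : t = ⟨s, hs⟩ := Subtype.ext h2
  rwa [← this]

theorem gen_top : (⨆ a, (TT a).subgroupOf SS) = ⊤ := by
  apply top_of_map
  have hT : ∀ a, ∀ g ∈ TT a, g ∈ (⨆ a, (TT a).subgroupOf SS).map SS.subtype := by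
    intro a g hg
    exact ⟨⟨g, hg.1⟩, Subgroup.mem_iSup_of_mem a (Subgroup.mem_subgroupOf.2 hg), rfl⟩
  obtain ⟨l, hl, e⟩ := x_prod
  apply le_of_conj
  · rw [e]
    apply list_prod_mem
    intro g hg
    obtain ⟨a, ha⟩ := hl g hg
    exact hT a g ha
  · have : y * x * y⁻¹ = (l.map (MulAut.conj y)).prod := by
      rw [← map_list_prod, ← e, MulAut.conj_apply]
    rw [this]
    apply list_prod_mem
    intro g hg
    obtain ⟨t, ht, rfl⟩ := List.mem_map.1 hg
    obtain ⟨a, ha⟩ := hl t ht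
    rw [MulAut.conj_apply]
    exact hT (y a) (y * t * y⁻¹) (TT_conj y_mem ha)

theorem x_comm : W cu * W cv * (W cu)⁻¹ * (W cv)⁻¹ = x := by
  have h : (BS.all fun b => Nat.beq ([cu, cv].foldr ev b) ([[1], cv, cu].foldr ev b)) = true := by
    decide +kernel
  have := W_eq h
  simp only [List.map_cons, List.map_nil, List.prod_cons, List.prod_nil, mul_one, W1, pow_one] at this
  rw [this]
  group

theorem cu_mem : W cu ∈ SS := W_SS _ (by decide)
theorem cv_mem : W cv ∈ SS := W_SS _ (by decide)

open scoped commutatorElement in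
theorem comm_map {H : Type*} [Group H] (K : Subgroup H) (u v : H) (hu : u ∈ K) (hv : v ∈ K) :
    u * v * u⁻¹ * v⁻¹ ∈ (commutator K).map K.subtype :=
  ⟨⁅(⟨u, hu⟩ : K), (⟨v, hv⟩ : K)⁆,
    Subgroup.commutator_mem_commutator (Subgroup.mem_top _) (Subgroup.mem_top _), rfl⟩

theorem perfect : commutator SS = ⊤ := by
  apply top_of_map
  apply le_of_conj
  · rw [← x_comm]
    exact comm_map SS _ _ cu_mem cv_mem
  · have := comm_map SS _ _ (SS_conj y_mem _ cu_mem) (SS_conj y_mem _ cv_mem)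
    rw [← x_comm]
    convert this using 1
    group

theorem x_ne : x ≠ 1 := by
  intro h
  have h1 : (x 0).val = 49 := by rw [x_val]; decide +kernel
  rw [h] at h1
  simp at h1

open Pointwise in
theorem SS_simple : IsSimpleGroup SS := by
  have : MulAction.IsPreprimitive SS (Fin 85) := prim_of le_rfl
  have : Nontrivial SS := ⟨⟨⟨x, SS_x⟩, 1, fun h => x_ne ((congrArg Subtype.val h).trans SS.coe_one)⟩⟩
  let I : MulAction.IwasawaStructure SS (Fin 85) :=
    { T := fun a => (TT a).subgroupOf SS
      is_comm := by
        intro a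
        refine ⟨⟨?_⟩⟩
        rintro ⟨g, hg⟩ ⟨h, hh⟩
        apply Subtype.ext
        apply Subtype.ext
        exact TT_comm a _ (Subgroup.mem_subgroupOf.1 hg) _ (Subgroup.mem_subgroupOf.1 hh)
      is_conj := by
        intro g a
        ext s
        rw [Subgroup.mem_pointwise_smul_iff_inv_smul_mem, Subgroup.mem_subgroupOf,
          Subgroup.mem_subgroupOf]
        have e : (((MulAut.conj g)⁻¹ • s : SS) : Perm (Fin 85)) = g.1⁻¹ * s.1 * g.1⁻¹⁻¹ := by
          rw [← map_inv, MulAut.smul_def, MulAut.conj_apply]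
          rfl
        rw [e]
        constructor
        · intro h
          have := TT_conj (inv_mem (SS_le g.2)) h
          have e2 : g.1⁻¹ (g • a) = a := inva _ _
          rwa [e2] at this
        · intro h
          have := TT_conj (SS_le g.2) h
          have e3 : g.1 * (g.1⁻¹ * s.1 * g.1⁻¹⁻¹) * g.1⁻¹ = s.1 := by group
          rwa [e3] at this
      is_generator := gen_top }
  exact I.isSimpleGroup perfect inferInstance

theorem cent {c : Perm (Fin 85)} (h : ∀ s ∈ SS, s * c = c * s) : c = 1 := by
  have h' : ∀ s ∈ SS, ∀ p, s (c p) = c (s p) := by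
    intro s hs p
    rw [← Perm.mul_apply, h s hs, Perm.mul_apply]
  have h1 : ∀ q : Fin 85, q ≠ 0 → (LA ++ L1).any (fun w => !(Nat.beq (ev w q) q)) = true := by
    decide +kernel
  have h2 : ∀ w ∈ LA ++ L1, w.length % 2 = 1 := by decide +kernel
  have h3 : fixc [0] (LA ++ L1) = true := by decide +kernel
  have h0 : c 0 = 0 := by
    by_contra hn
    obtain ⟨w, hw, h4⟩ := List.any_eq_true.1 (h1 _ hn)
    have h5 := h' (W w) (W_SS w (h2 w hw)) 0
    rw [fixc_spec h3 w hw 0 (by simp)] at h5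
    rw [Bool.not_eq_true', ← Bool.not_eq_true, beq_iff, ← W_val] at h4
    exact h4 (congrArg Fin.val h5)
  apply Equiv.ext
  intro q
  obtain ⟨w, -, hw, rfl⟩ := SS_trans q
  rw [← h' _ hw, h0]
  rfl

theorem almost_simple : ∃ S : Subgroup GG, S.Normal ∧ IsSimpleGroup S ∧
    (∃ a b : S, a * b ≠ b * a) ∧ Subgroup.centralizer (S : Set GG) = ⊥ := by
  refine ⟨SS.subgroupOf GG, ⟨?_⟩, ?_, ?_, ?_⟩
  · intro n hn g
    exact SS_conj g.2 _ hn
  · exact (Subgroup.subgroupOfEquivOfLe SS_le).isSimpleGroup_congr.2 SS_simple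
  · refine ⟨⟨⟨_, SS_le cu_mem⟩, cu_mem⟩, ⟨⟨_, SS_le cv_mem⟩, cv_mem⟩, ?_⟩
    intro h
    have h1 : W cu * W cv = W cv * W cu := congrArg (fun t => t.1.1) h
    have h2 := x_comm
    rw [h1] at h2
    apply x_ne
    rw [← h2]
    group
  · rw [eq_bot_iff]
    intro c hc
    rw [Subgroup.mem_bot]
    apply Subtype.ext
    apply cent
    intro s hs
    exact congrArg Subtype.val (Subgroup.mem_centralizer_iff.1 hc ⟨s, SS_le hs⟩ hs)

/-! ### rationality -/

theorem ord_x : orderOf x = 15 := by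
  rw [← Perm.lcm_cycleType, x_type]; decide +kernel
theorem ord_y : orderOf y = 2 := by
  rw [← Perm.lcm_cycleType, y_type]; decide +kernel
theorem ord_z : orderOf (x * y)⁻¹ = 4 := by
  rw [← Perm.lcm_cycleType, z_type]; decide +kernel

def Q (m : ℕ) : Prop := ∃ h ∈ GG, h * x * h⁻¹ = x ^ m

theorem Q_mul {m n : ℕ} (hm : Q m) (hn : Q n) : Q ((m * n) % 15) := by
  obtain ⟨a, ha, ea⟩ := hm
  obtain ⟨b, hb, eb⟩ := hn
  refine ⟨a * b, mul_mem ha hb, ?_⟩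
  rw [← pow_eq_pow_mod _ x15]
  calc a * b * x * (a * b)⁻¹ = a * (b * x * b⁻¹) * a⁻¹ := by group
    _ = x ^ (m * n) := by rw [eb, ← conj_pow, ea, pow_mul]

theorem Q2 : Q 2 := by
  have h : (BS.all fun b => Nat.beq ([hx2, [1]].foldr ev b) ([[2], hx2].foldr ev b)) = true := by
    decide +kernel
  have := W_eq h
  simp only [List.map_cons, List.map_nil, List.prod_cons, List.prod_nil, mul_one, W1, pow_one] at this
  exact ⟨W hx2, W_mem _, by rw [this, mul_inv_cancel_right]⟩

theorem Q14 : Q 14 := by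
  have h : (BS.all fun b => Nat.beq ([hxm, [1]].foldr ev b) ([[14], hxm].foldr ev b)) = true := by
    decide +kernel
  have := W_eq h
  simp only [List.map_cons, List.map_nil, List.prod_cons, List.prod_nil, mul_one, W1, pow_one] at this
  exact ⟨W hxm, W_mem _, by rw [this, mul_inv_cancel_right]⟩

theorem zpow_red {g : Perm (Fin 85)} {n : ℕ} (hn : g ^ n = 1) (k : ℤ) (r : ℕ)
    (h : k % (n : ℤ) = r) : g ^ k = g ^ r := by
  conv_lhs => rw [← Int.mul_ediv_add_emod k n, zpow_add, zpow_mul, h, zpow_natCast, hn, one_zpow,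
    one_mul, zpow_natCast]

theorem ndvd {k : ℤ} {n : ℕ} (h : Int.gcd k n = 1) (d : ℕ) (hd : d ∣ n) (h1 : d ≠ 1) :
    ¬ (d : ℤ) ∣ k := by
  intro h2
  have := Int.dvd_gcd h2 (Int.natCast_dvd_natCast.2 hd)
  rw [h] at this
  exact h1 (Nat.dvd_one.1 (by exact_mod_cast this))

theorem rat_x (k : ℤ) (hk : Int.gcd k (orderOf x) = 1) : ∃ h ∈ GG, h * x * h⁻¹ = x ^ k := by
  rw [ord_x] at hk
  have h3 := ndvd hk 3 (by norm_num) (by norm_num)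
  have h5 := ndvd hk 5 (by norm_num) (by norm_num)
  have Q4 : Q 4 := Q_mul Q2 Q2
  have Q8 : Q 8 := Q_mul Q4 Q2
  have Q1 : Q 1 := Q_mul Q14 Q14
  have Q13 : Q 13 := Q_mul Q14 Q2
  have Q11 : Q 11 := Q_mul Q14 Q4
  have Q7 : Q 7 := Q_mul Q14 Q8
  have hr : k % 15 = 1 ∨ k % 15 = 2 ∨ k % 15 = 4 ∨ k % 15 = 7 ∨ k % 15 = 8 ∨ k % 15 = 11 ∨
      k % 15 = 13 ∨ k % 15 = 14 := by omega
  rcases hr with h | h | h | h | h | h | h | h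
  · rw [zpow_red x15 k 1 h]; exact Q1
  · rw [zpow_red x15 k 2 h]; exact Q2
  · rw [zpow_red x15 k 4 h]; exact Q4
  · rw [zpow_red x15 k 7 h]; exact Q7
  · rw [zpow_red x15 k 8 h]; exact Q8
  · rw [zpow_red x15 k 11 h]; exact Q11
  · rw [zpow_red x15 k 13 h]; exact Q13
  · rw [zpow_red x15 k 14 h]; exact Q14

theorem rat_y (k : ℤ) (hk : Int.gcd k (orderOf y) = 1) : ∃ h ∈ GG, h * y * h⁻¹ = y ^ k := by
  rw [ord_y] at hk
  have h2 := ndvd hk 2 (by norm_num) (by norm_num)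
  have h : k % 2 = 1 := by omega
  refine ⟨1, one_mem _, ?_⟩
  rw [zpow_red (n := 2) (by rw [pow_two, yy]) k 1 h]
  simp

theorem W10 : W [1, 0] = x * y := by simp [W, M, mul_assoc, yy]

theorem rat_z (k : ℤ) (hk : Int.gcd k (orderOf (x * y)⁻¹) = 1) :
    ∃ h ∈ GG, h * (x * y)⁻¹ * h⁻¹ = (x * y)⁻¹ ^ k := by
  have h4 : (x * y)⁻¹ ^ 4 = 1 := by rw [← ord_z]; exact pow_orderOf_eq_one _
  rw [ord_z] at hk
  have h2 := ndvd hk 2 (by norm_num) (by norm_num)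
  have hr : k % 4 = 1 ∨ k % 4 = 3 := by omega
  rcases hr with h | h
  · refine ⟨1, one_mem _, ?_⟩
    rw [zpow_red h4 k 1 h]
    simp
  · refine ⟨W hz, W_mem _, ?_⟩
    rw [zpow_red h4 k 3 h]
    have h' : (BS.all fun b => Nat.beq ([[1, 0], hz, [1, 0]].foldr ev b) ([hz].foldr ev b)) = true := by
      decide +kernel
    have := W_eq h'
    simp only [List.map_cons, List.map_nil, List.prod_cons, List.prod_nil, mul_one, W10] at this
    have e : (x * y)⁻¹ ^ 3 = x * y := by
      rw [pow_succ, mul_eq_one_iff_eq_inv, inv_inv] at h4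
      exact h4
    rw [e]
    generalize x * y = c at this ⊢
    generalize W hz = w at this ⊢
    rw [mul_inv_eq_iff_eq_mul, mul_inv_eq_iff_eq_mul, mul_assoc]
    exact this.symm

/-! ### rigidity -/

def rr (j : ℕ) : List ℕ := RR.getD j []
def cj (i : ℕ) (r : List ℕ) (p : ℕ) : ℕ := xp i (ev r (xp (15 - i) p))
def ent (j i : ℕ) : ℕ := Nat.land (Nat.shiftRight (RT.getD j 0) (Nat.mul 12 i)) 4095
def chk (j i e : ℕ) : Bool :=
  Nat.ble (e / 16) 91 && Nat.ble (e % 16) 14 &&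
    BS.all fun b => Nat.beq (yf (cj i (rr j) (yf b))) (cj (e % 16) (rr (e / 16)) b)

theorem chk_all : (allb 92 fun j => allb 15 fun i => chk j i (ent j i)) = true := by
  decide +kernel

def Cl (g : Perm (Fin 85)) : Prop := ∃ j < 92, ∃ i : ℕ, g = x ^ i * W (rr j) * (x ^ i)⁻¹

theorem xinv_pow {i : ℕ} (hi : i ≤ 15) : (x ^ i)⁻¹ = x ^ (15 - i) := by
  apply inv_eq_of_mul_eq_one_right
  rw [← pow_add, Nat.add_sub_cancel' hi, x15]

theorem cj_val {i : ℕ} (hi : i ≤ 15) (r : List ℕ) (p : Fin 85) :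
    ((x ^ i * W r * (x ^ i)⁻¹) p).val = cj i r p.val := by
  rw [xinv_pow hi, Perm.mul_apply, Perm.mul_apply, x_pow, W_val, x_pow]
  rfl

theorem Cl_y {g : Perm (Fin 85)} (h : Cl g) : Cl (y * g * y) := by
  obtain ⟨j, hj, i, rfl⟩ := h
  rw [pow_eq_pow_mod i x15]
  have hi : i % 15 < 15 := Nat.mod_lt _ (by norm_num)
  generalize i % 15 = i at hi
  have h1 := allb_spec (allb_spec chk_all j hj) i hi
  generalize ent j i = e at h1
  simp only [chk, Bool.and_eq_true] at h1
  obtain ⟨⟨h2, h3⟩, h4⟩ := h1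
  have h2 := Nat.le_of_ble_eq_true h2
  have h3 := Nat.le_of_ble_eq_true h3
  refine ⟨e / 16, by omega, e % 16, ?_⟩
  have hm : ∀ i j, x ^ i * W (rr j) * (x ^ i)⁻¹ ∈ GG := fun i j =>
    mul_mem (mul_mem (pow_mem x_mem _) (W_mem _)) (inv_mem (pow_mem x_mem _))
  apply eq_of_base (mul_mem (mul_mem y_mem (hm _ _)) y_mem) (hm _ _)
  intro p hp
  apply Fin.ext
  rw [Perm.mul_apply, Perm.mul_apply, y_val, cj_val (by omega), cj_val (by omega), y_val]
  exact beq_iff.1 (List.all_eq_true.1 h4 p.val hp)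

theorem Cl_x {g : Perm (Fin 85)} (h : Cl g) (k : ℕ) : Cl (x ^ k * g * (x ^ k)⁻¹) := by
  obtain ⟨j, hj, i, rfl⟩ := h
  refine ⟨j, hj, k + i, ?_⟩
  rw [pow_add]
  group

theorem Cl_conj : ∀ h ∈ GG, (∀ g, Cl g → Cl (h * g * h⁻¹)) ∧ (∀ g, Cl g → Cl (h⁻¹ * g * h)) := by
  apply GG_ind
  · refine ⟨fun g hg => by simpa using Cl_x hg 1, fun g hg => ?_⟩
    have h14 : x ^ 14 = x⁻¹ := by
      have := xinv_pow (i := 1) (by norm_num)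
      rw [pow_one] at this
      exact this.symm
    have := Cl_x hg 14
    rwa [h14, inv_inv] at this
  · rw [yinv]
    exact ⟨fun g hg => Cl_y hg, fun g hg => Cl_y hg⟩
  · simp
  · rintro a b ⟨ha, ha'⟩ ⟨hb, hb'⟩
    refine ⟨fun s hs => ?_, fun s hs => ?_⟩
    · have := ha _ (hb s hs)
      simpa [mul_assoc] using this
    · have := hb' _ (ha' s hs)
      simpa [mul_assoc] using this
  · rintro a ⟨ha, ha'⟩
    exact ⟨by simpa using ha', by simpa using ha⟩

theorem W_rr0 : W (rr 0) = y := by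
  have : rr 0 = [0, 15] := by decide
  rw [this]
  simp [W, M, mul_assoc, yy, x15]

def fx (g : Perm (Fin 85)) : ℕ := (Finset.univ.filter fun p => g p = p).card

theorem fx_conj (c g : Perm (Fin 85)) : fx (c * g * c⁻¹) = fx g := by
  unfold fx
  symm
  apply Finset.card_equiv c
  intro p
  rw [Finset.mem_filter, Finset.mem_filter, Perm.mul_apply, Perm.mul_apply, inva,
    c.injective.eq_iff]
  simp

theorem fx_val (r : List ℕ) : fx (x * W r) =
    (Finset.univ.filter fun p : Fin 85 => Nat.beq (xp 1 (ev r p.val)) p.val = true).card := by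
  unfold fx
  congr 1
  apply Finset.filter_congr
  intro p _
  rw [beq_iff, ← W_val, ← x_val, ← Perm.mul_apply]
  exact Fin.ext_iff

theorem fx_chk : ∀ j < 92, fx (x * W (rr j)) = 7 → j = 0 := by
  have h : (allb 92 fun j => Nat.beq j 0 || !(Nat.beq
      (Finset.univ.filter fun p : Fin 85 => Nat.beq (xp 1 (ev (rr j) p.val)) p.val = true).card 7))
      = true := by decide +kernel
  intro j hj h7
  have h1 := allb_spec h j hj
  rw [← fx_val, h7] at h1
  simpa [beq_iff] using h1

theorem fx_xy : fx (x * y) = 7 := by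
  rw [← W_rr0, fx_val]
  decide +kernel

theorem rigid (x' y' z' : Perm (Fin 85)) (h1 : x' * y' * z' = 1)
    (hx : ∃ g ∈ GG, g * x * g⁻¹ = x') (hy : ∃ g ∈ GG, g * y * g⁻¹ = y')
    (hz : ∃ g ∈ GG, g * (x * y)⁻¹ * g⁻¹ = z') :
    ∃ g ∈ GG, g * x * g⁻¹ = x' ∧ g * y * g⁻¹ = y' ∧ g * (x * y)⁻¹ * g⁻¹ = z' := by
  obtain ⟨g, hg, ex⟩ := hx
  obtain ⟨h, hh, ey⟩ := hy
  obtain ⟨k, hk, ez⟩ := hz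
  have ez' : z' = (x' * y')⁻¹ := eq_inv_of_mul_eq_one_right h1
  have c0 : Cl y := ⟨0, by norm_num, 0, by rw [W_rr0]; simp⟩
  obtain ⟨j, hj, i, e⟩ := (Cl_conj _ (mul_mem (inv_mem hg) hh)).1 y c0
  have ey' : y' = g * (x ^ i * W (rr j) * (x ^ i)⁻¹) * g⁻¹ := by
    rw [← e, ← ey]; group
  have ex' : g * x ^ i * x * (g * x ^ i)⁻¹ = x' := by
    rw [← ex]; group
  have e2 : g * x ^ i * (x * W (rr j)) * (g * x ^ i)⁻¹ = k * (x * y) * k⁻¹ := by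
    have : x' * y' = k * (x * y) * k⁻¹ := by
      rw [← inv_inv (x' * y'), ← ez', ← ez]; group
    rw [← this, ← ex', ey']
    group
  have e3 : fx (x * W (rr j)) = 7 := by
    rw [← fx_conj (g * x ^ i), e2, fx_conj, fx_xy]
  have hj0 := fx_chk j hj e3
  subst hj0
  rw [W_rr0] at ey'
  have ey2 : g * x ^ i * y * (g * x ^ i)⁻¹ = y' := by rw [ey']; group
  refine ⟨g * x ^ i, mul_mem hg (pow_mem x_mem i), ex', ey2, ?_⟩
  rw [ez', ← ex', ← ey2]
  group

theorem ne_top : GG ≠ ⊤ := by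
  intro h
  have h1 := card_GG
  rw [h, Subgroup.card_top, Nat.card_perm, Nat.card_fin] at h1
  revert h1
  decide +kernel

theorem ne_alt : GG ≠ alternatingGroup (Fin 85) := by
  intro h
  have h1 := card_GG
  have h2 : 2 * Nat.card (alternatingGroup (Fin 85)) = Nat.card (Perm (Fin 85)) :=
    two_mul_nat_card_alternatingGroup
  rw [← h, h1, Nat.card_perm, Nat.card_fin] at h2
  revert h2
  decide +kernel

theorem genus : permInd x + permInd y + permInd (x * y)⁻¹ = 2 * (85 - 1) := by
  rw [permInd, permInd, permInd, x_type, y_type, z_type]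
  decide +kernel

theorem nice : IsNice x y (x * y)⁻¹ := by
  refine ⟨mul_inv_cancel _, ⟨ne_alt, ne_top⟩, ?_, almost_simple, genus, ?_, ?_⟩
  · have := prim_of SS_le
    exact ⟨inferInstance, fun B hB => this.isTrivialBlock_of_isBlock hB⟩
  · intro x' y' z' h1 _ hx hy hz
    exact rigid x' y' z' h1 hx hy hz
  · rintro g (rfl | rfl | rfl) k hk
    · exact rat_x k hk
    · exact rat_y k hk
    · exact rat_z k hk

end N85

theorem nice_triple_deg85_stmt8 :
    IsNice x y (x * y)⁻¹ ∧
    x.cycleType = Multiset.replicate 5 15 + Multiset.replicate 2 5 ∧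
    y.cycleType = Multiset.replicate 35 2 ∧
    ((x * y)⁻¹).cycleType = Multiset.replicate 16 4 + Multiset.replicate 7 2 ∧
    Nat.card ↥(Subgroup.closure {x, y} : Subgroup (Equiv.Perm (Fin 85))) = 1958400 := by
  exact ⟨N85.nice, N85.x_type, N85.y_type, N85.z_type, N85.card_GG⟩
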